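/- Let (T, Λ) be a cookie cutter system, let ψ : Λ → ℝ be Hölder continuous, let μ be a normalized Gibbs measure for ψ, let δ be the Hausdorff dimension of Λ, and suppose ψ − δφ is cohomologous to zero (there is a continuous h : Λ → ℝ with ψ − δφ = h∘T − h on Λ). Then there exist constants a₀ > 0 and b₀ > 0 such that for all a ≤ a₀ and all b ≥ b₀, every basic set satisfies the regularity bound: for every n ≥ 1 and every n-th level basic set I_n^i one has a·|I_n^i|^δ ≤ μ(I_n^i) ≤ b·|I_n^i|^δ. (Hence for such a, b the multifractal zeta function ζ_δ^μ(s) equals the full sum Σ_{n≥1} Σ_i |I_n^i|^s.) -/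

import Mathlib

/-!
A level-`n` basic set is the set of points whose first `n` iterates follow a prescribed itinerary
`w : ℕ → Fin k` (`basic_eq_cyl`). Since `T` is strictly monotone on each branch, such a cylinder is
a compact interval, and the mean value theorem applied branch by branch gives bounded distortion:
`log |I|` differs from the Birkhoff sum `φⁿ(x)`, for any `x ∈ I`, by at most a constant independent
of `n`, `I` and `x` (`cyl_interval`). Indeed the branch map `T : I → T(I)` contributes
`log |T' ξ| - log |T' x|` for some `ξ ∈ I`, of size at most `Ceps |I| ^ eps`, and these errors
decay geometrically in the level.

Telescoping the cohomology equation gives `ψⁿ(x) = δ φⁿ(x) + h(Tⁿ x) - h(x)` on the repeller, and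
`h` is bounded there because the repeller is compact. Every basic set meets the repeller
(a decreasing intersection of nonempty compact cylinders), so the Gibbs inequality at such a point
compares `μ(I)` with `exp (δ φⁿ(x))`, hence with `|I| ^ δ`.
-/

open MeasureTheory Set

/-- A cookie cutter system: `k ≥ 2` pairwise disjoint closed intervals
`[u j, v j] ⊆ [0,1]`, each mapped bijectively onto `[0,1]` by `T`, with
`T` differentiable with `ε`-Hölder derivative `T'` satisfying `|T'| ≥ lam > 1`. -/
structure CookieCutter where
  k : ℕ
  two_le_k : 2 ≤ k
  u : Fin k → ℝ
  v : Fin k → ℝ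
  T : ℝ → ℝ
  T' : ℝ → ℝ
  lam : ℝ
  eps : ℝ
  Ceps : ℝ
  nondeg : ∀ j, u j < v j
  subset_unit : ∀ j, Icc (u j) (v j) ⊆ Icc (0:ℝ) 1
  pair_disj : Pairwise fun i j => Disjoint (Icc (u i) (v i)) (Icc (u j) (v j))
  bijOn : ∀ j, BijOn T (Icc (u j) (v j)) (Icc (0:ℝ) 1)
  hasDeriv : ∀ x ∈ ⋃ j, Icc (u j) (v j),
    HasDerivWithinAt T (T' x) (⋃ j, Icc (u j) (v j)) x
  eps_pos : 0 < eps
  Ceps_nonneg : 0 ≤ Ceps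
  holder : ∀ x ∈ ⋃ j, Icc (u j) (v j), ∀ y ∈ ⋃ j, Icc (u j) (v j),
    |T' x - T' y| ≤ Ceps * |x - y| ^ eps
  one_lt_lam : 1 < lam
  expanding : ∀ x ∈ ⋃ j, Icc (u j) (v j), lam ≤ |T' x|

/-- The length of a (bounded) interval `I ⊆ ℝ`. -/
noncomputable def setLen (I : Set ℝ) : ℝ := sSup I - sInf I

namespace CookieCutter

variable (S : CookieCutter)

/-- The domain `I_1 ∪ ⋯ ∪ I_k` of the cookie cutter map. -/
def domain : Set ℝ := ⋃ j, Icc (S.u j) (S.v j)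

/-- The set `T^{-n}([0,1])`: points whose first `n` iterates stay in the domain. -/
def level (n : ℕ) : Set ℝ := {x | ∀ m < n, S.T^[m] x ∈ S.domain}

/-- `I` is an `n`-th level basic set, i.e. a connected component of `T^{-n}([0,1])`. -/
def IsBasic (n : ℕ) (I : Set ℝ) : Prop :=
  ∃ x ∈ S.level n, I = connectedComponentIn (S.level n) x

/-- The repeller `Λ = ⋂_{n ≥ 0} T^{-n}([0,1])`. -/
def repeller : Set ℝ := {x | ∀ n, S.T^[n] x ∈ S.domain}

/-- The function `φ = - log |T'|`. -/
noncomputable def phi (x : ℝ) : ℝ := - Real.log |S.T' x|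

/-- The Birkhoff sum `fⁿ(x) = Σ_{j<n} f(T^j x)`. -/
noncomputable def birkhoff (f : ℝ → ℝ) (n : ℕ) (x : ℝ) : ℝ :=
  ∑ j ∈ Finset.range n, f (S.T^[j] x)

/-- `f` is Hölder continuous on the set `A`. -/
def IsHolderOn (f : ℝ → ℝ) (A : Set ℝ) : Prop :=
  ∃ β C : ℝ, 0 < β ∧ β ≤ 1 ∧ 0 ≤ C ∧ ∀ x ∈ A, ∀ y ∈ A, |f x - f y| ≤ C * |x - y| ^ β

/-- `μ` is a normalized Gibbs measure for the potential `ψ`: a Borel probability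
measure on the repeller with `C ≤ μ(I_n^i)/e^{ψⁿ(x)} ≤ D` for every basic set. -/
def IsGibbs (ψ : ℝ → ℝ) (μ : Measure ℝ) : Prop :=
  IsProbabilityMeasure μ ∧ μ S.repellerᶜ = 0 ∧
    ∃ C D : ℝ, 0 < C ∧ 0 < D ∧
      ∀ n, 1 ≤ n → ∀ I, S.IsBasic n I → ∀ x ∈ I ∩ S.repeller,
        C * Real.exp (S.birkhoff ψ n x) ≤ (μ I).toReal ∧
          (μ I).toReal ≤ D * Real.exp (S.birkhoff ψ n x)

/-- `ν` is a `T`-invariant Borel probability measure on the repeller. -/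
def IsInvariantProb (ν : Measure ℝ) : Prop :=
  IsProbabilityMeasure ν ∧ ν S.repellerᶜ = 0 ∧
    ∀ A, MeasurableSet A → ν (S.T ⁻¹' A) = ν A

end CookieCutter

namespace CookieCutter

/-- The points of `[0,1]` whose first `n` iterates follow the itinerary `w`. For `n ≥ 1` the
restriction to `[0,1]` is automatic; it makes the level-`0` cylinder equal to `[0,1]`. -/
def cyl (S : CookieCutter) (n : ℕ) (w : ℕ → Fin S.k) : Set ℝ :=
  {x | x ∈ Icc (0:ℝ) 1 ∧ ∀ m < n, S.T^[m] x ∈ Icc (S.u (w m)) (S.v (w m))}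

variable (S : CookieCutter)

/-! ### Branches of the map and cylinders -/

lemma branch_subset (j : Fin S.k) : Icc (S.u j) (S.v j) ⊆ S.domain :=
  subset_iUnion (fun j => Icc (S.u j) (S.v j)) j

lemma continuousOn_T : ContinuousOn S.T S.domain :=
  fun x hx => (S.hasDeriv x hx).continuousWithinAt

lemma mono_or_anti (j : Fin S.k) :
    StrictMonoOn S.T (Icc (S.u j) (S.v j)) ∨ StrictAntiOn S.T (Icc (S.u j) (S.v j)) :=
  ContinuousOn.strictMonoOn_of_injOn_Icc' (S.nondeg j).le
    (S.continuousOn_T.mono (S.branch_subset j)) (S.bijOn j).injOn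

/-- Mean value theorem for `T` on a subinterval of a branch. -/
lemma exists_slope (j : Fin S.k) {p q : ℝ} (hp : p ∈ Icc (S.u j) (S.v j))
    (hq : q ∈ Icc (S.u j) (S.v j)) (hpq : p < q) :
    ∃ ξ ∈ Icc p q, |S.T q - S.T p| = |S.T' ξ| * (q - p) := by
  have hsub : Icc p q ⊆ Icc (S.u j) (S.v j) := Icc_subset_Icc hp.1 hq.2
  obtain ⟨c, hc, hs⟩ := exists_hasDerivAt_eq_slope S.T S.T' hpq
    (S.continuousOn_T.mono (hsub.trans (S.branch_subset j))) (fun x hx =>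
      (S.hasDeriv x (S.branch_subset j (hsub (Ioo_subset_Icc_self hx)))).hasDerivAt
        (Filter.mem_of_superset (Icc_mem_nhds hx.1 hx.2) (hsub.trans (S.branch_subset j))))
  refine ⟨c, Ioo_subset_Icc_self hc, ?_⟩
  have h0 : 0 < q - p := sub_pos.2 hpq
  rw [hs, abs_div, abs_of_pos h0]
  field_simp

lemma cyl_succ (n : ℕ) (w : ℕ → Fin S.k) :
    S.cyl (n + 1) w =
      Icc (S.u (w 0)) (S.v (w 0)) ∩ S.T ⁻¹' S.cyl n (fun i => w (i + 1)) := by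
  ext x
  constructor
  · rintro ⟨_, hx⟩
    have h0 : x ∈ Icc (S.u (w 0)) (S.v (w 0)) := hx 0 (Nat.succ_pos n)
    exact ⟨h0, (S.bijOn _).mapsTo h0, fun m hm => hx (m + 1) (by omega)⟩
  · rintro ⟨h0, _, hx⟩
    refine ⟨S.subset_unit _ h0, fun m hm => ?_⟩
    cases m with
    | zero => exact h0
    | succ m => exact hx m (by omega)

/-- The part of a branch lying over a subinterval of `[0,1]` is an interval. -/
lemma branch_preimage_Icc (j : Fin S.k) {p q : ℝ} (hp : p ∈ Icc (0:ℝ) 1) (hq : q ∈ Icc (0:ℝ) 1)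
    (hpq : p < q) :
    ∃ p' q', p' < q' ∧ p' ∈ Icc (S.u j) (S.v j) ∧ q' ∈ Icc (S.u j) (S.v j) ∧
      Icc (S.u j) (S.v j) ∩ S.T ⁻¹' Icc p q = Icc p' q' ∧ |S.T q' - S.T p'| = q - p := by
  obtain ⟨a, ha, hTa⟩ := (S.bijOn j).surjOn hp
  obtain ⟨b, hb, hTb⟩ := (S.bijOn j).surjOn hq
  have hne : |q - p| = q - p := abs_of_pos (sub_pos.2 hpq)
  rcases S.mono_or_anti j with hm | hm
  · refine ⟨a, b, (hm.lt_iff_lt ha hb).1 (by rwa [hTa, hTb]), ha, hb, ?_, by rw [hTa, hTb, hne]⟩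
    ext x
    constructor
    · rintro ⟨hx, h1, h2⟩
      exact ⟨(hm.le_iff_le ha hx).1 (by rwa [hTa]), (hm.le_iff_le hx hb).1 (by rwa [hTb])⟩
    · rintro ⟨h1, h2⟩
      have hx : x ∈ Icc (S.u j) (S.v j) := ⟨ha.1.trans h1, h2.trans hb.2⟩
      exact ⟨hx, by simpa [hTa] using (hm.le_iff_le ha hx).2 h1,
        by simpa [hTb] using (hm.le_iff_le hx hb).2 h2⟩
  · refine ⟨b, a, (hm.lt_iff_gt ha hb).1 (by rwa [hTa, hTb]), hb, ha, ?_,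
      by rw [hTa, hTb, abs_sub_comm, hne]⟩
    ext x
    constructor
    · rintro ⟨hx, h1, h2⟩
      exact ⟨(hm.le_iff_ge hx hb).1 (by rwa [hTb]), (hm.le_iff_ge ha hx).1 (by rwa [hTa])⟩
    · rintro ⟨h1, h2⟩
      have hx : x ∈ Icc (S.u j) (S.v j) := ⟨hb.1.trans h1, h2.trans ha.2⟩
      exact ⟨hx, by simpa [hTa] using (hm.le_iff_ge ha hx).2 h2,
        by simpa [hTb] using (hm.le_iff_ge hx hb).2 h1⟩

/-! ### Bounded distortion -/

lemma abs_log_sub_log_le {a b : ℝ} (ha : 1 ≤ a) (hb : 1 ≤ b) :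
    |Real.log a - Real.log b| ≤ |a - b| := by
  have key : ∀ {a b : ℝ}, 1 ≤ a → 1 ≤ b → Real.log a - Real.log b ≤ |a - b| := by
    intro a b ha hb
    have hb0 : 0 < b := by linarith
    rw [← Real.log_div (by linarith) hb0.ne']
    calc Real.log (a / b) ≤ a / b - 1 := Real.log_le_sub_one_of_pos (by positivity)
      _ = (a - b) / b := by field_simp
      _ ≤ |a - b| / b := by gcongr; exact le_abs_self _
      _ ≤ |a - b| := div_le_self (abs_nonneg _) hb
  rw [abs_le]
  have := key ha hb
  have h2 := key hb ha
  rw [abs_sub_comm] at h2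
  constructor <;> linarith

lemma one_le_abs_deriv {x : ℝ} (hx : x ∈ S.domain) : 1 ≤ |S.T' x| :=
  S.one_lt_lam.le.trans (S.expanding x hx)

/-- The contraction ratio `lam ^ (-eps)` of the successive distortion errors. -/
noncomputable def ratio : ℝ := S.lam ^ (-S.eps)

lemma ratio_pos : 0 < S.ratio := Real.rpow_pos_of_pos (by linarith [S.one_lt_lam]) _

lemma ratio_lt_one : S.ratio < 1 :=
  Real.rpow_lt_one_of_one_lt_of_neg S.one_lt_lam (by linarith [S.eps_pos])

/-- The distortion constant: the sum of the geometric series `Ceps * ratio ^ n`. -/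
noncomputable def distortion : ℝ := S.Ceps / (1 - S.ratio)

lemma distortion_nonneg : 0 ≤ S.distortion :=
  div_nonneg S.Ceps_nonneg (by linarith [S.ratio_lt_one])

lemma birkhoff_succ' (f : ℝ → ℝ) (n : ℕ) (x : ℝ) :
    S.birkhoff f (n + 1) x = f x + S.birkhoff f n (S.T x) := by
  simp only [birkhoff]
  rw [Finset.sum_range_succ', add_comm]
  rfl

/-- Cylinders are compact intervals, exponentially small in the level, with bounded distortion.
The factor `1 - ratio ^ n` is the partial sum of the geometric series of errors. -/
lemma cyl_interval (n : ℕ) : ∀ w : ℕ → Fin S.k, ∃ p q : ℝ, p < q ∧ S.cyl n w = Icc p q ∧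
    (q - p) ^ S.eps ≤ S.ratio ^ n ∧
    ∀ x ∈ S.cyl n w, |Real.log (q - p) - S.birkhoff S.phi n x| ≤ S.distortion * (1 - S.ratio ^ n) := by
  induction n with
  | zero =>
    intro w
    refine ⟨0, 1, one_pos, ?_, by simp, fun x _ => by simp [birkhoff]⟩
    ext x
    simp [cyl]
  | succ n ih =>
    intro w
    obtain ⟨p, q, hpq, hcyl, hlen, hdist⟩ := ih (fun i => w (i + 1))
    have hsub : Icc p q ⊆ Icc (0:ℝ) 1 := hcyl ▸ fun x hx => hx.1
    obtain ⟨p', q', hpq', hp', hq', hpre, hTlen⟩ := S.branch_preimage_Icc (w 0)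
      (hsub (left_mem_Icc.2 hpq.le)) (hsub (right_mem_Icc.2 hpq.le)) hpq
    obtain ⟨ξ, hξ, hslope⟩ := S.exists_slope (w 0) hp' hq' hpq'
    rw [hTlen] at hslope
    have hdom : Icc p' q' ⊆ S.domain :=
      (Icc_subset_Icc hp'.1 hq'.2).trans (S.branch_subset _)
    have hl0 : 0 < S.lam := by linarith [S.one_lt_lam]
    have hL : 0 < q - p := sub_pos.2 hpq
    have hL' : 0 < q' - p' := sub_pos.2 hpq'
    have hr := S.ratio_pos
    have hr1 := S.ratio_lt_one
    have hcyl' : S.cyl (n + 1) w = Icc p' q' := by rw [cyl_succ, hcyl, hpre]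
    have hlen' : (q' - p') ^ S.eps ≤ S.ratio ^ (n + 1) := by
      have h1 : q' - p' ≤ (q - p) * S.lam⁻¹ := by
        rw [← div_eq_mul_inv, le_div_iff₀ hl0, hslope, mul_comm]
        exact mul_le_mul_of_nonneg_right (S.expanding ξ (hdom hξ)) hL'.le
      calc (q' - p') ^ S.eps ≤ ((q - p) * S.lam⁻¹) ^ S.eps :=
            Real.rpow_le_rpow hL'.le h1 S.eps_pos.le
        _ = (q - p) ^ S.eps * S.ratio := by
            rw [Real.mul_rpow hL.le (inv_nonneg.2 hl0.le), ratio, Real.rpow_neg hl0.le,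
              Real.inv_rpow hl0.le]
        _ ≤ S.ratio ^ n * S.ratio := by gcongr
        _ = S.ratio ^ (n + 1) := (pow_succ _ _).symm
    refine ⟨p', q', hpq', hcyl', hlen', fun x hx => ?_⟩
    have hxI : x ∈ Icc p' q' := hcyl' ▸ hx
    have hTx : S.T x ∈ S.cyl n (fun i => w (i + 1)) := by
      rw [cyl_succ] at hx
      exact hx.2
    have hξ1 := S.one_le_abs_deriv (hdom hξ)
    have hx1 := S.one_le_abs_deriv (hdom hxI)
    have hlog : Real.log (q - p) = Real.log |S.T' ξ| + Real.log (q' - p') := by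
      rw [hslope, Real.log_mul (by linarith) hL'.ne']
    have herr : |Real.log (|S.T' x|) - Real.log (|S.T' ξ|)| ≤ S.Ceps * S.ratio ^ n := by
      calc |Real.log (|S.T' x|) - Real.log (|S.T' ξ|)| ≤ |(|S.T' x|) - (|S.T' ξ|)| :=
            abs_log_sub_log_le hx1 hξ1
        _ ≤ |S.T' x - S.T' ξ| := abs_abs_sub_abs_le _ _
        _ ≤ S.Ceps * |x - ξ| ^ S.eps := S.holder x (hdom hxI) ξ (hdom hξ)
        _ ≤ S.Ceps * (q' - p') ^ S.eps := by
            refine mul_le_mul_of_nonneg_left (Real.rpow_le_rpow (abs_nonneg _) ?_ S.eps_pos.le)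
              S.Ceps_nonneg
            exact abs_sub_le_iff.2 ⟨by linarith [hxI.2, hξ.1], by linarith [hxI.1, hξ.2]⟩
        _ ≤ S.Ceps * S.ratio ^ n := by
            refine mul_le_mul_of_nonneg_left (hlen'.trans ?_) S.Ceps_nonneg
            exact pow_le_pow_of_le_one hr.le hr1.le (Nat.le_succ n)
    have hgeom : S.Ceps * S.ratio ^ n + S.distortion * (1 - S.ratio ^ n)
        = S.distortion * (1 - S.ratio ^ (n + 1)) := by
      have : S.Ceps = S.distortion * (1 - S.ratio) := by
        rw [distortion, div_mul_cancel₀]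
        linarith
      rw [this]
      ring
    have hsplit : Real.log (q' - p') - S.birkhoff S.phi (n + 1) x =
        (Real.log |S.T' x| - Real.log |S.T' ξ|) +
          (Real.log (q - p) - S.birkhoff S.phi n (S.T x)) := by
      rw [birkhoff_succ', hlog, phi]
      ring
    rw [hsplit, ← hgeom]
    exact (abs_add_le _ _).trans (add_le_add herr (hdist _ hTx))

/-! ### Basic sets are cylinders meeting the repeller -/

/-- Every cylinder contains a point of the repeller, namely one following the whole itinerary. -/
lemma cyl_inter_repeller_nonempty (n : ℕ) (w : ℕ → Fin S.k) :
    (S.cyl n w ∩ S.repeller).Nonempty := by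
  have hc : ∀ m, IsCompact (S.cyl m w) ∧ (S.cyl m w).Nonempty := fun m => by
    obtain ⟨p, q, hpq, h, -⟩ := S.cyl_interval m w
    rw [h]
    exact ⟨isCompact_Icc, nonempty_Icc.2 hpq.le⟩
  obtain ⟨x, hx⟩ := IsCompact.nonempty_iInter_of_sequence_nonempty_isCompact_isClosed
    (fun m => S.cyl m w) (fun m x hx => ⟨hx.1, fun i hi => hx.2 i (by omega)⟩)
    (fun m => (hc m).2) (hc 0).1 (fun m => (hc m).1.isClosed)
  rw [mem_iInter] at hx
  exact ⟨x, hx n, fun m => S.branch_subset _ ((hx (m + 1)).2 m (Nat.lt_succ_self m))⟩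

lemma iterate_continuousOn (n : ℕ) : ∀ m ≤ n, ContinuousOn S.T^[m] (S.level n) := by
  intro m
  induction m with
  | zero => exact fun _ => continuousOn_id
  | succ m ih =>
    intro hm
    rw [Function.iterate_succ']
    exact S.continuousOn_T.comp (ih (by omega)) fun x hx => hx m (by omega)

/-- A preconnected subset of the domain stays in one branch. -/
lemma preconnected_subset_branch {C : Set ℝ} (hC : IsPreconnected C) (hsub : C ⊆ S.domain)
    (j : Fin S.k) {x : ℝ} (hx : x ∈ C) (hxj : x ∈ Icc (S.u j) (S.v j)) :
    C ⊆ Icc (S.u j) (S.v j) := by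
  have hclosed : IsClosed (⋃ i : {i : Fin S.k // i ≠ j}, Icc (S.u i) (S.v i)) :=
    isClosed_iUnion_of_finite fun i => isClosed_Icc
  have hdisj : Disjoint (Icc (S.u j) (S.v j))
      (⋃ i : {i : Fin S.k // i ≠ j}, Icc (S.u i) (S.v i)) :=
    disjoint_iUnion_right.2 fun i => S.pair_disj i.2.symm
  have hcov : C ⊆ Icc (S.u j) (S.v j) ∪ ⋃ i : {i : Fin S.k // i ≠ j}, Icc (S.u i) (S.v i) := by
    intro y hy
    obtain ⟨i, hi⟩ := mem_iUnion.1 (hsub hy)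
    by_cases hij : i = j
    · exact Or.inl (hij ▸ hi)
    · exact Or.inr (mem_iUnion.2 ⟨⟨i, hij⟩, hi⟩)
  rcases isPreconnected_iff_subset_of_disjoint_closed.1 hC _ _ isClosed_Icc hclosed hcov
    (by rw [hdisj.inter_eq, inter_empty]) with h | h
  · exact h
  · exact (disjoint_left.1 hdisj hxj (h hx)).elim

lemma basic_eq_cyl {n : ℕ} (hn : 1 ≤ n) {I : Set ℝ} (hI : S.IsBasic n I) :
    ∃ w, I = S.cyl n w := by
  obtain ⟨x, hx, rfl⟩ := hI
  have hk : 0 < S.k := by linarith [S.two_le_k]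
  have hex : ∀ m, ∃ j : Fin S.k, m < n → S.T^[m] x ∈ Icc (S.u j) (S.v j) := by
    intro m
    by_cases hm : m < n
    · obtain ⟨j, hj⟩ := mem_iUnion.1 (hx m hm)
      exact ⟨j, fun _ => hj⟩
    · exact ⟨⟨0, hk⟩, fun h => absurd h hm⟩
  choose w hw using hex
  refine ⟨w, Subset.antisymm ?_ ?_⟩
  · have hsub : connectedComponentIn (S.level n) x ⊆ S.level n :=
      connectedComponentIn_subset _ _
    have hmem := mem_connectedComponentIn hx
    have hall : ∀ m < n, ∀ y ∈ connectedComponentIn (S.level n) x,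
        S.T^[m] y ∈ Icc (S.u (w m)) (S.v (w m)) := by
      intro m hm y hy
      have himg : S.T^[m] '' connectedComponentIn (S.level n) x ⊆ S.domain := by
        rintro _ ⟨z, hz, rfl⟩
        exact hsub hz m hm
      exact S.preconnected_subset_branch
        (isPreconnected_connectedComponentIn.image _
          ((S.iterate_continuousOn n m hm.le).mono hsub)) himg (w m)
        (mem_image_of_mem _ hmem) (hw m hm) (mem_image_of_mem _ hy)
    exact fun y hy => ⟨S.subset_unit _ (hall 0 hn y hy), fun m hm => hall m hm y hy⟩
  · obtain ⟨p, q, -, h, -⟩ := S.cyl_interval n w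
    refine IsPreconnected.subset_connectedComponentIn ?_
      ⟨S.subset_unit _ (hw 0 hn), fun m hm => hw m hm⟩
      (fun y hy m hm => S.branch_subset _ (hy.2 m hm))
    rw [h]
    exact isPreconnected_Icc

/-! ### Compactness of the repeller and Birkhoff sums -/

lemma isClosed_domain : IsClosed S.domain := isClosed_iUnion_of_finite fun _ => isClosed_Icc

lemma isClosed_level (n : ℕ) : IsClosed (S.level n) := by
  induction n with
  | zero => simp [level]
  | succ n ih =>
    have : S.level (n + 1) = S.domain ∩ S.T ⁻¹' S.level n := by
      ext x
      constructor
      · exact fun hx => ⟨hx 0 (Nat.succ_pos n), fun m hm => hx (m + 1) (by omega)⟩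
      · rintro ⟨h0, hx⟩ m hm
        cases m with
        | zero => exact h0
        | succ m => exact hx m (by omega)
    rw [this]
    exact S.continuousOn_T.preimage_isClosed_of_isClosed S.isClosed_domain ih

lemma isCompact_repeller : IsCompact S.repeller := by
  have : S.repeller = ⋂ n, S.level n := by
    ext x
    simp only [mem_iInter]
    exact ⟨fun hx n m _ => hx m, fun hx n => hx (n + 1) n (Nat.lt_succ_self n)⟩
  refine isCompact_Icc.of_isClosed_subset (s := Icc (0:ℝ) 1) ?_ fun x hx => ?_
  · rw [this]
    exact isClosed_iInter S.isClosed_level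
  · obtain ⟨j, hj⟩ := mem_iUnion.1 (hx 0)
    exact S.subset_unit j hj

lemma iterate_mem_repeller {x : ℝ} (hx : x ∈ S.repeller) (n : ℕ) : S.T^[n] x ∈ S.repeller := by
  intro m
  rw [← Function.iterate_add_apply]
  exact hx _

/-- The cohomology equation telescopes along orbits in the repeller. -/
lemma birkhoff_cohomologous {ψ h : ℝ → ℝ} {δ : ℝ}
    (hcoh : ∀ x ∈ S.repeller, ψ x - δ * S.phi x = h (S.T x) - h x) {x : ℝ}
    (hx : x ∈ S.repeller) (n : ℕ) :
    S.birkhoff ψ n x = δ * S.birkhoff S.phi n x + (h (S.T^[n] x) - h x) := by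
  induction n with
  | zero => simp [birkhoff]
  | succ n ih =>
    have h1 := hcoh _ (S.iterate_mem_repeller hx n)
    simp only [birkhoff] at ih ⊢
    rw [Finset.sum_range_succ, Finset.sum_range_succ, ih, Function.iterate_succ_apply']
    linarith

end CookieCutter

/-- If `ψ - δφ` is cohomologous to zero, where `δ` is the Hausdorff dimension of the
repeller, then for all sufficiently small `a > 0` and sufficiently large `b`, every
basic set satisfies the regularity bounds `a|I|^δ ≤ μ(I) ≤ b|I|^δ`. -/
theorem all_basic_sets_regular_of_cohomologous (S : CookieCutter) (ψ : ℝ → ℝ)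
    (hψ : CookieCutter.IsHolderOn ψ S.repeller)
    (μ : Measure ℝ) (hμ : S.IsGibbs ψ μ)
    (h : ℝ → ℝ) (hcont : ContinuousOn h S.repeller)
    (hcoh : ∀ x ∈ S.repeller,
      ψ x - (dimH S.repeller).toReal * S.phi x = h (S.T x) - h x) :
    ∃ a₀ b₀ : ℝ, 0 < a₀ ∧ 0 < b₀ ∧
      ∀ a b : ℝ, 0 < a → a ≤ a₀ → b₀ ≤ b →
        ∀ n, 1 ≤ n → ∀ I, S.IsBasic n I →
          a * setLen I ^ ((dimH S.repeller).toReal) ≤ (μ I).toReal ∧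
            (μ I).toReal ≤ b * setLen I ^ ((dimH S.repeller).toReal) := by
  obtain ⟨-, -, C, D, hC, hD, hG⟩ := hμ
  obtain ⟨M, hM⟩ := S.isCompact_repeller.exists_bound_of_continuousOn hcont
  set δ := (dimH S.repeller).toReal with hδ
  have hδ0 : 0 ≤ δ := ENNReal.toReal_nonneg
  -- Total error: `2M` from the coboundary and `δ * distortion` from the distortion of lengths.
  set K := 2 * M + δ * S.distortion with hK
  refine ⟨C * Real.exp (-K), D * Real.exp K, by positivity, by positivity, ?_⟩
  intro a b ha haC hbD n hn I hI
  obtain ⟨w, rfl⟩ := S.basic_eq_cyl hn hI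
  obtain ⟨x, hx⟩ := S.cyl_inter_repeller_nonempty n w
  obtain ⟨hlow, hup⟩ := hG n hn _ hI x hx
  obtain ⟨p, q, hpq, hcyl, -, hdist⟩ := S.cyl_interval n w
  have hL : 0 < q - p := sub_pos.2 hpq
  have hlen : setLen (S.cyl n w) = q - p := by
    rw [hcyl, setLen, csSup_Icc hpq.le, csInf_Icc hpq.le]
  have hpow : setLen (S.cyl n w) ^ δ = Real.exp (δ * Real.log (q - p)) := by
    rw [hlen, Real.rpow_def_of_pos hL, mul_comm]
  have hdist' : |Real.log (q - p) - S.birkhoff S.phi n x| ≤ S.distortion := by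
    refine (hdist x hx.1).trans (mul_le_of_le_one_right S.distortion_nonneg ?_)
    linarith [pow_pos S.ratio_pos n]
  have hb1 := abs_le.1 (hM x hx.2)
  have hb2 := abs_le.1 (hM _ (S.iterate_mem_repeller hx.2 n))
  obtain ⟨hd1, hd2⟩ := abs_le.1 hdist'
  have hd1' := mul_le_mul_of_nonneg_left hd1 hδ0
  have hd2' := mul_le_mul_of_nonneg_left hd2 hδ0
  have hbirk := S.birkhoff_cohomologous hcoh hx.2 n
  rw [hpow]
  constructor
  · calc a * Real.exp (δ * Real.log (q - p))
        ≤ C * Real.exp (-K) * Real.exp (δ * Real.log (q - p)) := by gcongr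
      _ = C * Real.exp (-K + δ * Real.log (q - p)) := by rw [mul_assoc, ← Real.exp_add]
      _ ≤ C * Real.exp (S.birkhoff ψ n x) := by
          gcongr
          rw [hbirk]
          linarith
      _ ≤ _ := hlow
  · calc (μ (S.cyl n w)).toReal ≤ D * Real.exp (S.birkhoff ψ n x) := hup
      _ ≤ D * Real.exp (K + δ * Real.log (q - p)) := by
          gcongr
          rw [hbirk]
          linarith
      _ = D * Real.exp K * Real.exp (δ * Real.log (q - p)) := by rw [mul_assoc, ← Real.exp_add]
      _ ≤ b * Real.exp (δ * Real.log (q - p)) := by gcongr
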